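/- For all 3×3 complex matrices X, Y, U, V, W and Z, one has the matrix identity 6·(XYZWUV + YXZWUV) = pol₃(X+Y,U,V,W,Z) − pol₃(X,U,V,W,Z) − pol₃(Y,U,V,W,Z). -/

import Mathlib

open Matrix

/-- The polarization of the Cayley-Hamilton polynomial for 3x3 complex matrices. -/
noncomputable def pol (X Y : Matrix (Fin 3) (Fin 3) ℂ) : Matrix (Fin 3) (Fin 3) ℂ :=
  (trace X) • (Y * X + X * Y) + (trace (X * Y) - trace X * trace Y) • X
    + ((trace (X * X) - (trace X) ^ 2) / 2) • Y
    + (trace (Y * X * X) - trace X * trace (X * Y)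
        + trace Y * (((trace X) ^ 2 - trace (X * X)) / 2)) • (1 : Matrix (Fin 3) (Fin 3) ℂ)
    + (trace Y) • (X * X)

/-- Step 1 polynomial of the reduction algorithm. -/
noncomputable def pol₂ (X Y Z : Matrix (Fin 3) (Fin 3) ℂ) : Matrix (Fin 3) (Fin 3) ℂ :=
  pol Y (X * X * Z) + X * pol Y (X * Z) - pol X (Y * Y) * Z - pol X Y * Z * Y
    + (X * X) * pol Y Z

/-- Intermediate polynomial of STEP 2. -/
noncomputable def prepol₃ (X U V Z : Matrix (Fin 3) (Fin 3) ℂ) : Matrix (Fin 3) (Fin 3) ℂ :=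
  pol₂ X (U + V) Z - pol₂ X U Z - pol₂ X V Z

/-- STEP 2 polynomial of the reduction algorithm. -/
noncomputable def pol₃ (X U V W Z : Matrix (Fin 3) (Fin 3) ℂ) : Matrix (Fin 3) (Fin 3) ℂ :=
  prepol₃ X U V (Z * W) + prepol₃ X (W * U) V Z - prepol₃ X W V Z * U

lemma pol_eq (X Y : Matrix (Fin 3) (Fin 3) ℂ) :
    pol X Y = X * X * Y + X * Y * X + Y * X * X := by
  unfold pol
  ext i j
  fin_cases i <;> fin_cases j <;>
    simp [Matrix.trace, Matrix.mul_apply, Fin.sum_univ_three] <;> ring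

lemma pol₂_eq (X Y Z : Matrix (Fin 3) (Fin 3) ℂ) :
    pol₂ X Y Z = 3 * (X * X * Z * Y * Y) := by
  unfold pol₂
  simp only [pol_eq]
  noncomm_ring

lemma prepol₃_eq (X U V Z : Matrix (Fin 3) (Fin 3) ℂ) :
    prepol₃ X U V Z = 3 * (X * X * Z * (U * V + V * U)) := by
  unfold prepol₃
  simp only [pol₂_eq]
  noncomm_ring

lemma pol₃_eq (X U V W Z : Matrix (Fin 3) (Fin 3) ℂ) :
    pol₃ X U V W Z = 6 * (X * X * Z * W * U * V) := by
  unfold pol₃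
  simp only [prepol₃_eq]
  noncomm_ring

/-- STEP 3: `6·(XYZWUV + YXZWUV)` equals the polarization of `pol₃` in its first argument. -/
theorem step3_reduction (X Y U V W Z : Matrix (Fin 3) (Fin 3) ℂ) :
    (6 : ℂ) • (X * Y * Z * W * U * V + Y * X * Z * W * U * V)
      = pol₃ (X + Y) U V W Z - pol₃ X U V W Z - pol₃ Y U V W Z := by
  have h : ∀ A : Matrix (Fin 3) (Fin 3) ℂ, (6 : ℂ) • A = 6 * A := by
    intro A
    rw [ofNat_smul_eq_nsmul ℂ 6 A, nsmul_eq_mul]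
    rfl
  rw [h]
  simp only [pol₃_eq]
  noncomm_ring
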